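/- Let p : ℝ^{n₁} × ℝ^{n₂} → ℝ be a polynomial of total degree at most d, let G be a standard Gaussian random vector on ℝ^{n₁}, let B be uniformly distributed on {−1,1}^{n₂} independent of G, and let t ≥ 2 be a real number. Then E[|p(G,B)|^t] ≤ (t−1)^{td/2}·E[p(G,B)²]^{t/2}. -/

import Mathlib

open MeasureTheory ProbabilityTheory
open scoped ENNReal

/-- The standard Gaussian measure on `ℝⁿ`. -/
noncomputable def stdGaussian (n : ℕ) : Measure (Fin n → ℝ) :=
  Measure.pi fun _ => gaussianReal 0 1

/-- The uniform (Bernoulli) measure on `{-1, 1}`. -/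
noncomputable def bernoulliPM : Measure ℝ :=
  ((1 : ℝ≥0∞) / 2) • Measure.dirac (1 : ℝ) + ((1 : ℝ≥0∞) / 2) • Measure.dirac (-1 : ℝ)

/-- The uniform measure on `{-1, 1}ⁿ`. -/
noncomputable def bernoulliCube (n : ℕ) : Measure (Fin n → ℝ) :=
  Measure.pi fun _ => bernoulliPM

/-!
For a single sign `ε` the inequality is Bonami's `‖a + b ε‖_t ≤ ‖a + √(t - 1) b ε‖₂`, proved by
differentiating `‖1 + x ε‖_t ^ 2` in `x`. A polynomial of degree at most `d` in signs has the form
`a + ε b`, where `a` and `b` are polynomials in the remaining signs of degree at most `d` and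
`d - 1`, so Minkowski's inequality and induction on the number of signs give
`‖p‖_t ≤ (t - 1) ^ (d / 2) ‖p‖₂` on the discrete cube.

A standard Gaussian is the weak limit of normalized sums of independent signs, and a polynomial of
degree at most `d` in such sums is a polynomial of degree at most `d` in the signs, so the
inequality holds along the approximating sequence. It passes to the limit because a reverse Hölder
inequality `‖f‖_q ≤ C ‖f‖_p` with `p < q` itself makes the truncations of `f` converge to `f` in
`L^p`, uniformly along the sequence, relative to `‖f‖_p`.
-/

open Filter MvPolynomial Topology
open scoped NNReal BoundedContinuousFunction

section TwoPoint

/-- The even part `((1 + x) ^ s + (1 - x) ^ s) / 2` of `x ↦ (1 + x) ^ s`; on `[0, 1]` it is the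
`s`-th moment of `1 + x ε` for a uniform sign `ε`. -/
noncomputable def evenRpow (s x : ℝ) : ℝ := ((1 + x) ^ s + (1 - x) ^ s) / 2

/-- The odd part `((1 + x) ^ s - (1 - x) ^ s) / 2` of `x ↦ (1 + x) ^ s`; up to a factor it is the
derivative of `evenRpow (s + 1)`. -/
noncomputable def oddRpow (s x : ℝ) : ℝ := ((1 + x) ^ s - (1 - x) ^ s) / 2

variable {s t x : ℝ}

lemma hasDerivAt_evenRpow (hs : 1 ≤ s) (x : ℝ) :
    HasDerivAt (evenRpow s) (s * oddRpow (s - 1) x) x := by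
  have hplus := ((hasDerivAt_id x).const_add 1).rpow_const (p := s) (Or.inr hs)
  have hminus := ((hasDerivAt_id x).const_sub 1).rpow_const (p := s) (Or.inr hs)
  refine ((hplus.add hminus).div_const 2).congr_deriv ?_
  simp only [oddRpow, id]
  ring

lemma hasDerivAt_oddRpow (hs : 1 ≤ s) (x : ℝ) :
    HasDerivAt (oddRpow s) (s * evenRpow (s - 1) x) x := by
  have hplus := ((hasDerivAt_id x).const_add 1).rpow_const (p := s) (Or.inr hs)
  have hminus := ((hasDerivAt_id x).const_sub 1).rpow_const (p := s) (Or.inr hs)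
  refine ((hplus.sub hminus).div_const 2).congr_deriv ?_
  simp only [evenRpow, id]
  ring

lemma evenRpow_pos (hx₀ : 0 ≤ x) (hx₁ : x ≤ 1) : 0 < evenRpow s x := by
  have hplus : 0 < (1 + x) ^ s := Real.rpow_pos_of_pos (by linarith) s
  have hminus : 0 ≤ (1 - x) ^ s := Real.rpow_nonneg (by linarith) s
  exact div_pos (add_pos_of_pos_of_nonneg hplus hminus) two_pos

lemma oddRpow_nonneg (hs : 0 ≤ s) (hx₀ : 0 ≤ x) (hx₁ : x ≤ 1) : 0 ≤ oddRpow s x :=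
  div_nonneg (sub_nonneg.2 (Real.rpow_le_rpow (by linarith) (by linarith) hs)) zero_le_two

lemma monotoneOn_evenRpow (hs : 1 ≤ s) : MonotoneOn (evenRpow s) (Set.Icc 0 1) := by
  refine monotoneOn_of_hasDerivWithinAt_nonneg (convex_Icc 0 1)
    (fun z _ ↦ (hasDerivAt_evenRpow hs z).continuousAt.continuousWithinAt)
    (fun z _ ↦ (hasDerivAt_evenRpow hs z).hasDerivWithinAt) fun z hz ↦ ?_
  obtain ⟨hz₀, hz₁⟩ := interior_subset hz
  exact mul_nonneg (by linarith) (oddRpow_nonneg (by linarith) hz₀ hz₁)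

lemma evenRpow_le_evenRpow_rpow_div (hs : 0 ≤ s) (hst : s ≤ t) (ht : 0 < t) (hx₀ : 0 ≤ x)
    (hx₁ : x ≤ 1) : evenRpow s x ≤ evenRpow t x ^ (s / t) := by
  have hconcave := (Real.concaveOn_rpow (by positivity) (div_le_one_of_le₀ hst ht.le)).2
    (Set.mem_Ici.2 (Real.rpow_nonneg (by linarith : 0 ≤ 1 + x) t))
    (Set.mem_Ici.2 (Real.rpow_nonneg (by linarith : 0 ≤ 1 - x) t))
    (by norm_num : (0 : ℝ) ≤ 1 / 2) (by norm_num : (0 : ℝ) ≤ 1 / 2) (by norm_num)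
  simp only [smul_eq_mul] at hconcave
  rw [← Real.rpow_mul (by linarith), ← Real.rpow_mul (by linarith), mul_div_cancel₀ _ ht.ne']
    at hconcave
  have hmean : ∀ u v : ℝ, 1 / 2 * u + 1 / 2 * v = (u + v) / 2 := fun u v ↦ by ring
  simpa only [evenRpow, hmean] using hconcave

lemma oddRpow_le_mul_evenRpow (ht : 2 ≤ t) (hx₀ : 0 ≤ x) (hx₁ : x ≤ 1) :
    oddRpow (t - 1) x ≤ (t - 1) * x * evenRpow t x ^ ((t - 2) / t) := by
  rcases hx₀.eq_or_lt with rfl | hx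
  · simp [oddRpow]
  obtain ⟨ξ, ⟨hξ₀, hξx⟩, hslope⟩ := exists_hasDerivAt_eq_slope (oddRpow (t - 1))
    (fun z ↦ (t - 1) * evenRpow (t - 1 - 1) z) hx
    (fun z _ ↦ (hasDerivAt_oddRpow (by linarith) z).continuousAt.continuousWithinAt)
    (fun z _ ↦ hasDerivAt_oddRpow (by linarith) z)
  have hmvt : oddRpow (t - 1) x = (t - 1) * x * evenRpow (t - 2) ξ := by
    rw [eq_div_iff (by linarith), show t - 1 - 1 = t - 2 by ring] at hslope
    simp only [show oddRpow (t - 1) 0 = 0 by simp [oddRpow], sub_zero] at hslope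
    linarith
  have hξ₁ : ξ ≤ 1 := hξx.le.trans hx₁
  rw [hmvt]
  refine mul_le_mul_of_nonneg_left ?_ (mul_nonneg (by linarith) hx₀)
  calc evenRpow (t - 2) ξ ≤ evenRpow t ξ ^ ((t - 2) / t) :=
        evenRpow_le_evenRpow_rpow_div (by linarith) (by linarith) (by linarith) hξ₀.le hξ₁
    _ ≤ evenRpow t x ^ ((t - 2) / t) :=
        Real.rpow_le_rpow (evenRpow_pos hξ₀.le hξ₁).le
          (monotoneOn_evenRpow (by linarith) ⟨hξ₀.le, hξ₁⟩ ⟨hx₀, hx₁⟩ hξx.le)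
          (div_nonneg (by linarith) (by linarith))

lemma antitoneOn_evenRpow_rpow_sub (ht : 2 ≤ t) :
    AntitoneOn (fun x ↦ evenRpow t x ^ (2 / t) - (t - 1) * x ^ 2) (Set.Icc 0 1) := by
  have hderiv : ∀ z ∈ Set.Icc (0 : ℝ) 1, HasDerivAt
      (fun x ↦ evenRpow t x ^ (2 / t) - (t - 1) * x ^ 2)
      (t * oddRpow (t - 1) z * (2 / t) * evenRpow t z ^ (2 / t - 1) - (t - 1) * (2 * z)) z := by
    intro z hz
    refine (((hasDerivAt_evenRpow (by linarith) z).rpow_const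
      (Or.inl (evenRpow_pos hz.1 hz.2).ne')).sub
      (((hasDerivAt_id z).pow 2).const_mul (t - 1))).congr_deriv ?_
    simp
  refine antitoneOn_of_hasDerivWithinAt_nonpos (convex_Icc 0 1)
    (fun z hz ↦ (hderiv z hz).continuousAt.continuousWithinAt)
    (fun z hz ↦ (hderiv z (interior_subset hz)).hasDerivWithinAt) fun z hz ↦ ?_
  obtain ⟨hz₀, hz₁⟩ := interior_subset hz
  have hpos : 0 < evenRpow t z := evenRpow_pos hz₀ hz₁
  have hcancel : evenRpow t z ^ ((t - 2) / t) * evenRpow t z ^ (2 / t - 1) = 1 := by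
    rw [← Real.rpow_add hpos, show (t - 2) / t + (2 / t - 1) = 0 by field_simp; ring,
      Real.rpow_zero]
  rw [sub_nonpos]
  calc t * oddRpow (t - 1) z * (2 / t) * evenRpow t z ^ (2 / t - 1)
      = 2 * (oddRpow (t - 1) z * evenRpow t z ^ (2 / t - 1)) := by field_simp
    _ ≤ 2 * ((t - 1) * z * evenRpow t z ^ ((t - 2) / t) * evenRpow t z ^ (2 / t - 1)) := by
        gcongr
        exact oddRpow_le_mul_evenRpow ht hz₀ hz₁
    _ = (t - 1) * (2 * z) := by rw [mul_assoc _ _ (_ ^ (2 / t - 1)), hcancel]; ring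

lemma evenRpow_le (ht : 2 ≤ t) (hx₀ : 0 ≤ x) (hx₁ : x ≤ 1) :
    evenRpow t x ≤ (1 + (t - 1) * x ^ 2) ^ (t / 2) := by
  have hroot : evenRpow t x ^ (2 / t) ≤ 1 + (t - 1) * x ^ 2 := by
    have hzero : evenRpow t 0 = 1 := by simp [evenRpow]
    have hanti := antitoneOn_evenRpow_rpow_sub ht (Set.left_mem_Icc.2 zero_le_one) ⟨hx₀, hx₁⟩ hx₀
    simp only [hzero, Real.one_rpow] at hanti
    linarith
  have hpos := (evenRpow_pos (s := t) hx₀ hx₁).le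
  calc evenRpow t x = (evenRpow t x ^ (2 / t)) ^ (t / 2) := by
        rw [← Real.rpow_mul hpos, show 2 / t * (t / 2) = 1 by field_simp, Real.rpow_one]
    _ ≤ (1 + (t - 1) * x ^ 2) ^ (t / 2) :=
        Real.rpow_le_rpow (Real.rpow_nonneg hpos _) hroot (by linarith)

lemma two_point_of_le {a b : ℝ} (ht : 2 ≤ t) (hb : 0 ≤ b) (hba : b ≤ a) :
    ((a + b) ^ t + (a - b) ^ t) / 2 ≤ (a ^ 2 + (t - 1) * b ^ 2) ^ (t / 2) := by
  rcases (hb.trans hba).eq_or_lt with rfl | ha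
  · obtain rfl : b = 0 := le_antisymm hba hb
    simp [Real.zero_rpow (by linarith : t ≠ 0), Real.zero_rpow (by linarith : t / 2 ≠ 0)]
  have hx₀ : 0 ≤ b / a := by positivity
  have hx₁ : b / a ≤ 1 := (div_le_one ha).2 hba
  calc ((a + b) ^ t + (a - b) ^ t) / 2 = a ^ t * evenRpow t (b / a) := by
        rw [show a + b = a * (1 + b / a) by field_simp, show a - b = a * (1 - b / a) by field_simp,
          Real.mul_rpow ha.le (by linarith), Real.mul_rpow ha.le (by linarith), evenRpow]
        ring
    _ ≤ a ^ t * (1 + (t - 1) * (b / a) ^ 2) ^ (t / 2) := by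
        gcongr
        exact evenRpow_le ht hx₀ hx₁
    _ = (a ^ 2 * (1 + (t - 1) * (b / a) ^ 2)) ^ (t / 2) := by
        rw [Real.mul_rpow (by positivity) (by nlinarith [sq_nonneg (b / a)]),
          ← Real.rpow_natCast_mul ha.le, Nat.cast_two, mul_div_cancel₀ t two_ne_zero]
    _ = (a ^ 2 + (t - 1) * b ^ 2) ^ (t / 2) := by congr 1; field_simp

lemma two_point_inequality (ht : 2 ≤ t) (a b : ℝ) :
    (|a + b| ^ t + |a - b| ^ t) / 2 ≤ (a ^ 2 + (t - 1) * b ^ 2) ^ (t / 2) := by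
  wlog hb : 0 ≤ b generalizing b
  · simpa [add_comm, ← sub_eq_add_neg] using this (-b) (by linarith)
  wlog ha : 0 ≤ a generalizing a
  · have hneg := this (-a) (by linarith)
    rwa [neg_sq, neg_add_eq_sub, abs_sub_comm, ← neg_add', abs_neg, add_comm (_ ^ t)] at hneg
  wlog hba : b ≤ a generalizing a b
  · have hab : a ≤ b := (not_le.1 hba).le
    have hswap := this a ha b hb hab
    rw [add_comm b a, abs_sub_comm b a] at hswap
    refine hswap.trans (Real.rpow_le_rpow (by nlinarith [sq_nonneg a, sq_nonneg b]) ?_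
      (by linarith))
    nlinarith [mul_nonneg (sub_nonneg.2 ht) (sub_nonneg.2 (pow_le_pow_left₀ ha hab 2))]
  rw [abs_of_nonneg (add_nonneg ha hb), abs_of_nonneg (sub_nonneg.2 hba)]
  exact two_point_of_le ht hb hba

end TwoPoint

section Polynomial

variable {R : Type*} [CommSemiring R] {σ τ : Type*}

lemma totalDegree_bind₁_le {L : σ → MvPolynomial τ R} {k : ℕ} (hL : ∀ i, (L i).totalDegree ≤ k)
    (p : MvPolynomial σ R) : (bind₁ L p).totalDegree ≤ p.totalDegree * k := by
  rw [bind₁, aeval_def, eval₂_eq]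
  refine totalDegree_finsetSum_le fun m hm ↦ ?_
  calc (algebraMap R (MvPolynomial τ R) (coeff m p) * ∏ i ∈ m.support, L i ^ m i).totalDegree
      ≤ (C (coeff m p)).totalDegree + ∑ i ∈ m.support, (L i ^ m i).totalDegree :=
        (totalDegree_mul _ _).trans (by gcongr; exacts [le_rfl, totalDegree_finsetProd _ _])
    _ ≤ 0 + ∑ i ∈ m.support, m i * k := by
        gcongr with i
        · exact (totalDegree_C _).le
        · exact (totalDegree_pow _ _).trans (by gcongr; exact hL i)
    _ ≤ p.totalDegree * k := by
        rw [zero_add, ← Finset.sum_mul]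
        gcongr
        exact le_totalDegree hm

lemma exists_eval_cons_eq_add_mul {n d : ℕ} (p : MvPolynomial (Fin (n + 1)) R)
    (hp : p.totalDegree ≤ d + 1) :
    ∃ a b : MvPolynomial (Fin n) R, a.totalDegree ≤ d + 1 ∧ b.totalDegree ≤ d ∧
      ∀ (x : Fin n → R) (y : R), y ^ 2 = 1 →
        eval (Fin.cons y x : Fin (n + 1) → R) p = eval x a + y * eval x b := by
  set P := finSuccEquiv R n p
  have hcoeff : ∀ k, (P.coeff k).totalDegree ≤ d + 1 - k := fun k ↦ by
    rcases eq_or_ne (P.coeff k) 0 with h | h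
    · simp [h]
    · have := totalDegree_coeff_finSuccEquiv_add_le p k h
      lia
  refine ⟨∑ k ∈ P.support with Even k, P.coeff k, ∑ k ∈ P.support with ¬Even k, P.coeff k,
    totalDegree_finsetSum_le fun k _ ↦ (hcoeff k).trans (Nat.sub_le _ _),
    totalDegree_finsetSum_le fun k hk ↦ ?_, fun x y hy ↦ ?_⟩
  · have hodd : ¬Even k := (Finset.mem_filter.1 hk).2
    have hk₀ : k ≠ 0 := by rintro rfl; exact hodd Even.zero
    exact (hcoeff k).trans (by lia)
  · have heven : ∀ k, Even k → y ^ k = 1 := by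
      rintro _ ⟨j, rfl⟩
      rw [← two_mul, pow_mul, hy, one_pow]
    have hodd : ∀ k, ¬Even k → y ^ k = y := fun k hk ↦ by
      obtain ⟨j, rfl⟩ := Nat.not_even_iff_odd.1 hk
      rw [pow_succ, pow_mul, hy, one_pow, one_mul]
    rw [eval_eq_eval_mv_eval', Polynomial.eval_map, Polynomial.eval₂_eq_sum, Polynomial.sum_def,
      ← Finset.sum_filter_add_sum_filter_not _ Even, map_sum, map_sum, Finset.mul_sum]
    congr 1 <;> refine Finset.sum_congr rfl fun k hk ↦ ?_
    · rw [heven k (Finset.mem_filter.1 hk).2, mul_one]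
    · rw [hodd k (Finset.mem_filter.1 hk).2, mul_comm]

end Polynomial

/-- Hypercontractivity of polynomials under `μ`: the inequality
`‖p‖_t ≤ (t - 1) ^ (d / 2) ‖p‖₂` for all polynomials `p` of degree at most `d` and all real `t ≥ 2`.
Norms are taken in `ℝ≥0∞`, so nothing is assumed about the moments of `μ`. -/
def IsPolynomiallyHypercontractive {ι : Type*} (μ : Measure (ι → ℝ)) : Prop :=
  ∀ ⦃d : ℕ⦄ (p : MvPolynomial ι ℝ), p.totalDegree ≤ d → ∀ t : ℝ, 2 ≤ t →
    eLpNorm (fun z ↦ eval z p) (.ofReal t) μ ≤ .ofReal √(t - 1) ^ d * eLpNorm (fun z ↦ eval z p) 2 μ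

lemma IsPolynomiallyHypercontractive.map {ι κ : Type*} [Countable ι] [Countable κ]
    {μ : Measure (κ → ℝ)} (hμ : IsPolynomiallyHypercontractive μ) {L : ι → MvPolynomial κ ℝ}
    (hL : ∀ i, (L i).totalDegree ≤ 1) :
    IsPolynomiallyHypercontractive (μ.map fun z i ↦ eval z (L i)) := by
  intro d p hp t ht
  have hmeas : Measurable fun (z : κ → ℝ) i ↦ eval z (L i) :=
    measurable_pi_lambda _ fun i ↦ (L i).continuous_eval.measurable
  have hcomp : (fun z ↦ eval z p) ∘ (fun (z : κ → ℝ) i ↦ eval z (L i)) =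
      fun z ↦ eval z (bind₁ L p) :=
    funext fun z ↦ (eval₂Hom_bind₁ (RingHom.id ℝ) z L p).symm
  have hp_meas := p.continuous_eval.measurable.aestronglyMeasurable
    (μ := μ.map fun z i ↦ eval z (L i))
  rw [eLpNorm_map_measure hp_meas hmeas.aemeasurable,
    eLpNorm_map_measure hp_meas hmeas.aemeasurable, hcomp]
  exact hμ _ ((totalDegree_bind₁_le hL p).trans (by simpa using hp)) t ht

section Cube

variable {X : Type*} [MeasurableSpace X] {μ : Measure X} {f g : X → ℝ} {t : ℝ}

instance : IsProbabilityMeasure bernoulliPM :=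
  ⟨by simp [bernoulliPM, ENNReal.inv_two_add_inv_two]⟩

lemma lintegral_bernoulliPM (h : ℝ → ℝ≥0∞) : ∫⁻ y, h y ∂bernoulliPM = (h 1 + h (-1)) / 2 := by
  simp [bernoulliPM, lintegral_add_measure, ENNReal.div_eq_inv_mul, mul_add]

lemma integral_bernoulliPM (h : ℝ → ℝ) : ∫ y, h y ∂bernoulliPM = (h 1 + h (-1)) / 2 := by
  rw [bernoulliPM, integral_add_measure ((integrable_dirac (by simp)).smul_measure (by simp))
    ((integrable_dirac (by simp)).smul_measure (by simp))]
  simp [div_eq_inv_mul, mul_add]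

lemma lintegral_bernoulliPM_prod [SFinite μ] {h : ℝ × X → ℝ≥0∞} (hh : Measurable h) :
    ∫⁻ z, h z ∂(bernoulliPM.prod μ) = ∫⁻ x, (h (1, x) + h (-1, x)) / 2 ∂μ := by
  simp only [lintegral_prod_symm _ hh.aemeasurable, lintegral_bernoulliPM]

lemma eLpNorm_sq_eq_lintegral_rpow (ht : 0 < t) (f : X → ℝ) :
    eLpNorm f (.ofReal t) μ ^ 2 = (∫⁻ x, ‖f x‖ₑ ^ t ∂μ) ^ (1 / (t / 2)) := by
  rw [eLpNorm_eq_lintegral_rpow_enorm_toReal (by simpa using ht) ENNReal.ofReal_ne_top,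
    ENNReal.toReal_ofReal ht.le, ← ENNReal.rpow_mul_natCast]
  congr 1
  push_cast
  field_simp

lemma enorm_two_point_inequality (ht : 2 ≤ t) (a b : ℝ) :
    (‖a + b‖ₑ ^ t + ‖a - b‖ₑ ^ t) / 2 ≤ (‖a‖ₑ ^ 2 + ‖√(t - 1) * b‖ₑ ^ 2) ^ (t / 2) := by
  have h := ENNReal.ofReal_le_ofReal (two_point_inequality ht a b)
  rw [ENNReal.ofReal_div_of_pos two_pos, ENNReal.ofReal_add (by positivity) (by positivity),
    ← ENNReal.ofReal_rpow_of_nonneg (abs_nonneg _) (by linarith),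
    ← ENNReal.ofReal_rpow_of_nonneg (abs_nonneg _) (by linarith),
    ← ENNReal.ofReal_rpow_of_nonneg (by nlinarith [sq_nonneg a, sq_nonneg b]) (by linarith),
    ← Real.sq_sqrt (by linarith : 0 ≤ t - 1), ← mul_pow, ← sq_abs a, ← sq_abs (_ * b),
    ENNReal.ofReal_add (by positivity) (by positivity), ENNReal.ofReal_pow (abs_nonneg _),
    ENNReal.ofReal_pow (abs_nonneg _)] at h
  simpa only [Real.enorm_eq_ofReal_abs, ENNReal.ofReal_ofNat] using h

lemma eLpNorm_bernoulliPM_prod_sq_le [SFinite μ] (ht : 2 ≤ t) (hf : Measurable f)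
    (hg : Measurable g) :
    eLpNorm (fun z : ℝ × X ↦ f z.2 + z.1 * g z.2) (.ofReal t) (bernoulliPM.prod μ) ^ 2 ≤
      eLpNorm f (.ofReal t) μ ^ 2 + .ofReal √(t - 1) ^ 2 * eLpNorm g (.ofReal t) μ ^ 2 := by
  have hconst : .ofReal √(t - 1) ^ 2 * eLpNorm g (.ofReal t) μ ^ 2 =
      eLpNorm (fun x ↦ √(t - 1) * g x) (.ofReal t) μ ^ 2 := by
    rw [← mul_pow, ← Real.enorm_of_nonneg (Real.sqrt_nonneg _), ← eLpNorm_const_smul]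
    rfl
  have ht₀ : 0 < t := by linarith
  have hsq : ∀ u : ℝ≥0∞, u ^ t = (u ^ 2) ^ (t / 2) := fun u ↦ by
    rw [← ENNReal.rpow_natCast_mul, Nat.cast_two, mul_div_cancel₀ t two_ne_zero]
  rw [hconst, eLpNorm_sq_eq_lintegral_rpow ht₀, eLpNorm_sq_eq_lintegral_rpow ht₀,
    eLpNorm_sq_eq_lintegral_rpow ht₀, lintegral_bernoulliPM_prod (by fun_prop)]
  calc (∫⁻ x, (‖f x + 1 * g x‖ₑ ^ t + ‖f x + -1 * g x‖ₑ ^ t) / 2 ∂μ) ^ (1 / (t / 2))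
      ≤ (∫⁻ x, (‖f x‖ₑ ^ 2 + ‖√(t - 1) * g x‖ₑ ^ 2) ^ (t / 2) ∂μ) ^ (1 / (t / 2)) := by
        gcongr with x
        simpa [← sub_eq_add_neg] using enorm_two_point_inequality ht (f x) (g x)
    _ ≤ (∫⁻ x, (‖f x‖ₑ ^ 2) ^ (t / 2) ∂μ) ^ (1 / (t / 2)) +
          (∫⁻ x, (‖√(t - 1) * g x‖ₑ ^ 2) ^ (t / 2) ∂μ) ^ (1 / (t / 2)) :=
        ENNReal.lintegral_Lp_add_le (by fun_prop) (by fun_prop) (by linarith)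
    _ = _ := by simp only [hsq]

lemma eLpNorm_two_bernoulliPM_prod_sq [SFinite μ] (hf : Measurable f) (hg : Measurable g) :
    eLpNorm (fun z : ℝ × X ↦ f z.2 + z.1 * g z.2) 2 (bernoulliPM.prod μ) ^ 2 =
      eLpNorm f 2 μ ^ 2 + eLpNorm g 2 μ ^ 2 := by
  have hL2 : ∀ {Y : Type _} [MeasurableSpace Y] {ν : Measure Y} (h : Y → ℝ),
      eLpNorm h 2 ν ^ 2 = ∫⁻ y, ‖h y‖ₑ ^ 2 ∂ν := fun h ↦ by
    simpa using eLpNorm_sq_eq_lintegral_rpow two_pos h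
  have hparallelogram (a b : ℝ) :
      (‖a + 1 * b‖ₑ ^ 2 + ‖a + -1 * b‖ₑ ^ 2) / 2 = ‖a‖ₑ ^ 2 + ‖b‖ₑ ^ 2 := by
    simp only [Real.enorm_eq_ofReal_abs, ← ENNReal.ofReal_pow (abs_nonneg _), sq_abs]
    rw [← ENNReal.ofReal_add (by positivity) (by positivity),
      ← ENNReal.ofReal_add (by positivity) (by positivity), ← ENNReal.ofReal_ofNat 2,
      ← ENNReal.ofReal_div_of_pos two_pos]
    ring_nf
  rw [hL2, hL2, hL2, lintegral_bernoulliPM_prod (by fun_prop), ← lintegral_add_left (by fun_prop)]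
  simp only [hparallelogram]

instance (n : ℕ) : IsProbabilityMeasure (bernoulliCube n) :=
  inferInstanceAs (IsProbabilityMeasure (Measure.pi _))

lemma measurePreserving_cons_bernoulliCube (n : ℕ) :
    MeasurePreserving (fun z : ℝ × (Fin n → ℝ) ↦ (Fin.cons z.1 z.2 : Fin (n + 1) → ℝ))
      (bernoulliPM.prod (bernoulliCube n)) (bernoulliCube (n + 1)) := by
  simpa [bernoulliCube, MeasurableEquiv.piFinSuccAbove, Fin.insertNthEquiv] using
    (measurePreserving_piFinSuccAbove (fun _ : Fin (n + 1) ↦ bernoulliPM) 0).symm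

lemma ae_bernoulliPM_sq_eq_one : ∀ᵐ y ∂bernoulliPM, y ^ 2 = 1 := by
  simp [bernoulliPM, ae_dirac_eq]

lemma eLpNorm_bernoulliCube_succ {n : ℕ} {f : (Fin (n + 1) → ℝ) → ℝ} {a b : (Fin n → ℝ) → ℝ}
    (hf : Measurable f)
    (hab : ∀ x y, y ^ 2 = 1 → f (Fin.cons y x : Fin (n + 1) → ℝ) = a x + y * b x) (q : ℝ≥0∞) :
    eLpNorm f q (bernoulliCube (n + 1)) =
      eLpNorm (fun z : ℝ × (Fin n → ℝ) ↦ a z.2 + z.1 * b z.2) q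
        (bernoulliPM.prod (bernoulliCube n)) := by
  rw [← eLpNorm_comp_measurePreserving hf.aestronglyMeasurable
    (measurePreserving_cons_bernoulliCube n)]
  refine eLpNorm_congr_ae ?_
  filter_upwards [Measure.quasiMeasurePreserving_fst.ae ae_bernoulliPM_sq_eq_one] with z hz
  exact hab z.2 z.1 hz

lemma eLpNorm_eval_of_totalDegree_eq_zero {ι : Type*} {ν : Measure (ι → ℝ)}
    [IsProbabilityMeasure ν] {p : MvPolynomial ι ℝ} (hp : p.totalDegree = 0) {q : ℝ≥0∞}
    (hq : q ≠ 0) : eLpNorm (fun z ↦ eval z p) q ν = ‖coeff 0 p‖ₑ := by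
  rw [totalDegree_eq_zero_iff_eq_C.1 hp]
  simp [eLpNorm_const _ hq (IsProbabilityMeasure.ne_zero ν)]

theorem isPolynomiallyHypercontractive_bernoulliCube (n : ℕ) :
    IsPolynomiallyHypercontractive (bernoulliCube n) := by
  intro d p hp t ht
  have ht₀ : ENNReal.ofReal t ≠ 0 := (ENNReal.ofReal_pos.2 (by linarith)).ne'
  set K := ENNReal.ofReal √(t - 1)
  have hK : 1 ≤ K := ENNReal.one_le_ofReal.2 (Real.one_le_sqrt.2 (by linarith))
  induction n generalizing d with
  | zero =>
    have hp₀ : p.totalDegree = 0 := by rw [eq_C_of_isEmpty p, totalDegree_C]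
    rw [eLpNorm_eval_of_totalDegree_eq_zero hp₀ ht₀,
      eLpNorm_eval_of_totalDegree_eq_zero hp₀ two_ne_zero]
    exact le_mul_of_one_le_left' (one_le_pow₀ hK)
  | succ n ih =>
    rcases d with _ | d
    · have hp₀ : p.totalDegree = 0 := Nat.le_zero.1 hp
      rw [eLpNorm_eval_of_totalDegree_eq_zero hp₀ ht₀,
        eLpNorm_eval_of_totalDegree_eq_zero hp₀ two_ne_zero, pow_zero, one_mul]
    obtain ⟨a, b, ha, hb, hab⟩ := exists_eval_cons_eq_add_mul p hp
    have ha_meas := a.continuous_eval.measurable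
    have hb_meas := b.continuous_eval.measurable
    rw [← ENNReal.pow_le_pow_left_iff two_ne_zero, mul_pow,
      eLpNorm_bernoulliCube_succ p.continuous_eval.measurable hab,
      eLpNorm_bernoulliCube_succ p.continuous_eval.measurable hab,
      eLpNorm_two_bernoulliPM_prod_sq ha_meas hb_meas]
    calc _ ≤ eLpNorm (fun z ↦ eval z a) (.ofReal t) (bernoulliCube n) ^ 2 +
          K ^ 2 * eLpNorm (fun z ↦ eval z b) (.ofReal t) (bernoulliCube n) ^ 2 :=
          eLpNorm_bernoulliPM_prod_sq_le ht ha_meas hb_meas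
      _ ≤ (K ^ (d + 1) * eLpNorm (fun z ↦ eval z a) 2 (bernoulliCube n)) ^ 2 +
          K ^ 2 * (K ^ d * eLpNorm (fun z ↦ eval z b) 2 (bernoulliCube n)) ^ 2 := by
        gcongr
        exacts [ih a ha, ih b hb]
      _ = _ := by ring

end Cube

section WeakLimit

variable {X : Type*} [MeasurableSpace X] {f : X → ℝ} {p q : ℝ≥0∞}

lemma eLpNorm_le_of_forall_eLpNorm_min_le {μ : Measure X} (hf : Measurable f) {B : ℝ≥0∞}
    (hB : ∀ n : ℕ, eLpNorm (fun x ↦ min |f x| n) q μ ≤ B) : eLpNorm f q μ ≤ B := by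
  rw [← eLpNorm_norm]
  refine Lp.eLpNorm_le_of_ae_tendsto (u := atTop) (f := fun (n : ℕ) x ↦ min |f x| n)
    (.of_forall hB) (fun n ↦ Measurable.aestronglyMeasurable (by fun_prop)) (.of_forall fun x ↦ ?_)
  obtain ⟨m, hm⟩ := exists_nat_ge |f x|
  exact tendsto_const_nhds.congr' ((eventually_ge_atTop m).mono fun n hn ↦
    (min_eq_left (hm.trans (Nat.cast_le.2 hn))).symm)

lemma tendsto_measure_le_abs_atTop_zero (hf : Measurable f) (μ : Measure X) [IsFiniteMeasure μ] :
    Tendsto (fun n : ℕ ↦ μ {x | n ≤ |f x|}) atTop (𝓝 0) := by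
  have hempty : ⋂ n : ℕ, {x | n ≤ |f x|} = ∅ :=
    Set.eq_empty_of_forall_notMem fun x hx ↦ by
      obtain ⟨n, hn⟩ := exists_nat_gt |f x|
      exact (Set.mem_iInter.1 hx n).not_gt hn
  have hmeas (n : ℕ) : MeasurableSet {x | n ≤ |f x|} :=
    measurableSet_le measurable_const hf.norm
  rw [← measure_empty (μ := μ), ← hempty]
  refine tendsto_measure_iInter_atTop (fun n ↦ (hmeas n).nullMeasurableSet)
    (fun m n hmn x (hx : (n : ℝ) ≤ |f x|) ↦ ?_) ⟨0, measure_ne_top μ _⟩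
  exact (Nat.cast_le.2 hmn).trans hx

lemma eLpNorm_le_eLpNorm_min_add {μ : Measure X} (hf : Measurable f) (hp : 1 ≤ p) (hpq : p ≤ q)
    {M : ℝ} (hM : 0 ≤ M) :
    eLpNorm f p μ ≤ eLpNorm (fun x ↦ min |f x| M) p μ +
      eLpNorm f q μ * μ {x | M ≤ |f x|} ^ (1 / p.toReal - 1 / q.toReal) := by
  set S := {x | M ≤ |f x|}
  have hS : MeasurableSet S := measurableSet_le measurable_const hf.norm
  have hsmall : eLpNorm (Sᶜ.indicator f) p μ ≤ eLpNorm (fun x ↦ min |f x| M) p μ := by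
    refine eLpNorm_mono_real fun x ↦ ?_
    by_cases hx : M ≤ |f x|
    · simp [S, hx, hM]
    · simp [S, hx, (not_le.1 hx).le]
  have hlarge : eLpNorm (S.indicator f) p μ ≤
      eLpNorm f q μ * μ S ^ (1 / p.toReal - 1 / q.toReal) := by
    rw [eLpNorm_indicator_eq_eLpNorm_restrict hS]
    refine (eLpNorm_le_eLpNorm_mul_rpow_measure_univ hpq hf.aestronglyMeasurable).trans ?_
    rw [Measure.restrict_apply_univ]
    gcongr
    exact Measure.restrict_le_self
  calc eLpNorm f p μ = eLpNorm (Sᶜ.indicator f + S.indicator f) p μ := by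
        rw [Set.indicator_compl_add_self]
    _ ≤ eLpNorm (Sᶜ.indicator f) p μ + eLpNorm (S.indicator f) p μ :=
        eLpNorm_add_le (hf.indicator hS.compl).aestronglyMeasurable
          (hf.indicator hS).aestronglyMeasurable hp
    _ ≤ _ := add_le_add hsmall hlarge

variable [TopologicalSpace X] [OpensMeasurableSpace X]
  {κ : Type*} {l : Filter κ} {P : κ → ProbabilityMeasure X} {P₀ : ProbabilityMeasure X}

lemma tendsto_eLpNorm_of_tendsto (hP : Tendsto P l (𝓝 P₀)) (hf : Continuous f) {M : ℝ}
    (hM : ∀ x, ‖f x‖ ≤ M) (hq : q ≠ 0) (hq' : q ≠ ∞) :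
    Tendsto (fun k ↦ eLpNorm f q (P k)) l (𝓝 (eLpNorm f q P₀)) := by
  have hpow (x : X) : ‖f x‖ₑ ^ q.toReal = (‖‖f x‖ ^ q.toReal‖₊ : ℝ≥0) := by
    rw [Real.nnnorm_rpow_of_nonneg (norm_nonneg _), nnnorm_norm,
      ENNReal.coe_rpow_of_nonneg _ ENNReal.toReal_nonneg, enorm_eq_nnnorm]
  let g : X →ᵇ ℝ := .ofNormedAddCommGroup (fun x ↦ ‖f x‖ ^ q.toReal)
    (hf.norm.rpow_const fun _ ↦ .inr ENNReal.toReal_nonneg) (M ^ q.toReal) fun x ↦ by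
      rw [Real.norm_of_nonneg (by positivity)]
      gcongr
      exact hM x
  simp only [eLpNorm_eq_lintegral_rpow_enorm_toReal hq hq', hpow]
  exact (ENNReal.continuous_rpow_const.tendsto _).comp
    (ProbabilityMeasure.tendsto_iff_forall_lintegral_tendsto.1 hP g.nnnorm)

variable [HasOuterApproxClosed X]

lemma exists_eventually_mul_eLpNorm_le_eLpNorm_min (hP : Tendsto P l (𝓝 P₀)) (hf : Continuous f)
    (hp : 1 ≤ p) (hpq : p < q) (hq : q ≠ ∞) {C : ℝ≥0∞} (hC : C ≠ ∞)
    (hLp : ∀ k, eLpNorm f p (P k) ≠ ∞)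
    (hrev : ∀ k, eLpNorm f q (P k) ≤ C * eLpNorm f p (P k)) {r : ℝ≥0∞} (hr : r < 1) :
    ∃ n : ℕ, ∀ᶠ k in l, r * eLpNorm f p (P k) ≤ eLpNorm (fun x ↦ min |f x| n) p (P k) := by
  set s := 1 / p.toReal - 1 / q.toReal
  have hs : 0 < s := sub_pos.2 (one_div_lt_one_div_of_lt
    (ENNReal.toReal_pos (zero_lt_one.trans_le hp).ne' hpq.ne_top)
    ((ENNReal.toReal_lt_toReal hpq.ne_top hq).2 hpq))
  have hsmall : Tendsto (fun u : ℝ≥0∞ ↦ C * u ^ s) (𝓝 0) (𝓝 0) := by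
    simpa [ENNReal.zero_rpow_of_pos hs] using
      ENNReal.Tendsto.const_mul ((ENNReal.continuous_rpow_const (y := s)).tendsto 0) (.inr hC)
  obtain ⟨ε, hε, hCε⟩ : ∃ ε > 0, ∀ u < ε, C * u ^ s < 1 - r :=
    ENNReal.nhds_zero_basis.eventually_iff.1
      (hsmall.eventually_lt_const (tsub_pos_of_lt hr))
  obtain ⟨n, hn⟩ := ((tendsto_measure_le_abs_atTop_zero hf.measurable
    (P₀ : Measure X)).eventually_lt_const hε).exists
  have htail : ∀ᶠ k in l, (P k : Measure X) {x | n ≤ |f x|} < ε :=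
    eventually_lt_of_limsup_lt ((ProbabilityMeasure.limsup_measure_closed_le_of_tendsto hP
      (isClosed_le continuous_const hf.norm)).trans_lt hn)
  refine ⟨n, htail.mono fun k hk ↦ ?_⟩
  set N := eLpNorm f p (P k)
  have hle : N ≤ eLpNorm (fun x ↦ min |f x| n) p (P k) + (1 - r) * N := by
    calc N ≤ _ := eLpNorm_le_eLpNorm_min_add hf.measurable hp hpq.le n.cast_nonneg
      _ ≤ _ + C * N * (P k : Measure X) {x | n ≤ |f x|} ^ s := by
        gcongr
        exact hrev k
      _ ≤ _ := by
        rw [mul_right_comm]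
        gcongr
        exact (hCε _ hk).le
  refine ENNReal.le_of_add_le_add_right (ENNReal.mul_ne_top (by simp) (hLp k)) (le_trans ?_ hle)
  rw [← add_mul, add_tsub_cancel_of_le hr.le, one_mul]

theorem eLpNorm_le_mul_eLpNorm_of_tendsto [l.NeBot] (hP : Tendsto P l (𝓝 P₀)) (hf : Continuous f)
    (hp : 1 ≤ p) (hpq : p < q) (hq : q ≠ ∞) {C : ℝ≥0∞} (hC : C ≠ ∞)
    (hLp : ∀ k, eLpNorm f p (P k) ≠ ∞)
    (hrev : ∀ k, eLpNorm f q (P k) ≤ C * eLpNorm f p (P k)) :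
    eLpNorm f q P₀ ≤ C * eLpNorm f p P₀ := by
  have hp₀ : p ≠ 0 := (zero_lt_one.trans_le hp).ne'
  have hmin (n : ℕ) (x : X) : ‖min |f x| n‖ = min |f x| n :=
    Real.norm_of_nonneg (le_min (abs_nonneg _) n.cast_nonneg)
  have htrunc (n : ℕ) {r : ℝ≥0∞} (hr : r ≠ 0) (hr' : r ≠ ∞) :
      Tendsto (fun k ↦ eLpNorm (fun x ↦ min |f x| n) r (P k)) l
        (𝓝 (eLpNorm (fun x ↦ min |f x| n) r P₀)) :=
    tendsto_eLpNorm_of_tendsto hP (hf.abs.min continuous_const)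
      (fun x ↦ (hmin n x).trans_le (min_le_right _ _)) hr hr'
  have hle (n : ℕ) (r : ℝ≥0∞) (μ : Measure X) :
      eLpNorm (fun x ↦ min |f x| n) r μ ≤ eLpNorm f r μ :=
    eLpNorm_mono fun x ↦ (hmin n x).trans_le (min_le_left _ _)
  refine eLpNorm_le_of_forall_eLpNorm_min_le hf.measurable fun m ↦ ?_
  refine ENNReal.le_of_forall_lt_one_mul_le fun r hr ↦ ?_
  obtain ⟨n, hn⟩ := exists_eventually_mul_eLpNorm_le_eLpNorm_min hP hf hp hpq hq hC hLp hrev hr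
  have hbound : ∀ᶠ k in l, r * eLpNorm (fun x ↦ min |f x| m) q (P k) ≤
      C * eLpNorm (fun x ↦ min |f x| n) p (P k) := hn.mono fun k hk ↦
    calc r * eLpNorm (fun x ↦ min |f x| m) q (P k) ≤ r * (C * eLpNorm f p (P k)) := by
          gcongr
          exact (hle m q _).trans (hrev k)
      _ = C * (r * eLpNorm f p (P k)) := by ring
      _ ≤ C * eLpNorm (fun x ↦ min |f x| n) p (P k) := by gcongr
  calc r * eLpNorm (fun x ↦ min |f x| m) q P₀ ≤ C * eLpNorm (fun x ↦ min |f x| n) p P₀ :=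
        le_of_tendsto_of_tendsto
          (ENNReal.Tendsto.const_mul (htrunc m (hp₀.bot_lt.trans hpq).ne' hq) (.inr hr.ne_top))
          (ENNReal.Tendsto.const_mul (htrunc n hp₀ hpq.ne_top) (.inr hC)) hbound
    _ ≤ C * eLpNorm f p P₀ := by
        gcongr
        exact hle n p _

end WeakLimit

section Moments

variable {ι : Type*} {q : ℝ≥0∞}

lemma memLp_eval_of_forall_memLp {μ : Measure (ι → ℝ)} [IsFiniteMeasure μ]
    (hμ : ∀ i, ∀ q ≠ ∞, MemLp (fun z ↦ z i) q μ) (p : MvPolynomial ι ℝ) (hq : q ≠ ∞) :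
    MemLp (fun z ↦ eval z p) q μ := by
  induction p using MvPolynomial.induction_on generalizing q with
  | C a => simpa using memLp_const a
  | add p₁ p₂ h₁ h₂ => simpa [Pi.add_def] using (h₁ hq).add (h₂ hq)
  | mul_X p i h =>
    have : ENNReal.HolderTriple (2 * q) (2 * q) q :=
      ⟨by rw [ENNReal.mul_inv (by simp) (by simp), ← add_mul, ENNReal.inv_two_add_inv_two, one_mul]⟩
    have h2q : 2 * q ≠ ∞ := ENNReal.mul_ne_top (by simp) hq
    simpa using (hμ i _ h2q).mul' (h h2q)

lemma memLp_eval_pi [Fintype ι] {ν : ι → Measure ℝ} [∀ i, IsProbabilityMeasure (ν i)]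
    (hν : ∀ i, ∀ q ≠ ∞, MemLp id q (ν i)) (p : MvPolynomial ι ℝ) (hq : q ≠ ∞) :
    MemLp (fun z ↦ eval z p) q (Measure.pi ν) :=
  memLp_eval_of_forall_memLp
    (fun i q hq ↦ (hν i q hq).comp_measurePreserving (measurePreserving_eval ν i)) p hq

lemma memLp_id_bernoulliPM : MemLp id q bernoulliPM :=
  .of_bound aestronglyMeasurable_id 1 <| ae_bernoulliPM_sq_eq_one.mono fun y hy ↦
    (sq_le_one_iff_abs_le_one y).1 hy.le

end Moments

section CentralLimit

variable {ι : Type*} [Fintype ι]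

/-- The law of `(ε₁ + ⋯ + ε_m) / √m`, where the `ε_j` are independent uniform signs;
for `m = 0` it is the Dirac mass at `0`. -/
noncomputable def normalizedSignSum (m : ℕ) : ProbabilityMeasure ℝ :=
  ⟨(bernoulliCube m).map fun z ↦ (√m)⁻¹ * ∑ j, z j,
    Measure.isProbabilityMeasure_map (by fun_prop)⟩

lemma toMeasure_normalizedSignSum (m : ℕ) :
    (normalizedSignSum m : Measure ℝ) = (bernoulliCube m).map fun z ↦ (√m)⁻¹ * ∑ j, z j :=
  rfl

lemma charFun_normalizedSignSum (m : ℕ) (s : ℝ) :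
    charFun (normalizedSignSum m : Measure ℝ) s = charFun bernoulliPM ((√m)⁻¹ * s) ^ m := by
  have hsum := congrFun (charFun_map_sum_pi_eq_prod fun _ : Fin m ↦ bernoulliPM) ((√m)⁻¹ * s)
  rw [toMeasure_normalizedSignSum, charFun_map_mul_comp (by fun_prop)]
  simpa [bernoulliCube] using hsum

lemma normalizedSignSum_one : (normalizedSignSum 1 : Measure ℝ) = bernoulliPM :=
  Measure.ext_of_charFun <| funext fun s ↦ by simp [charFun_normalizedSignSum]

lemma tendsto_normalizedSignSum :
    Tendsto normalizedSignSum atTop (𝓝 ⟨gaussianReal 0 1, inferInstance⟩) := by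
  refine ProbabilityMeasure.tendsto_iff_tendsto_charFun.2 fun s ↦ ?_
  simpa [charFun_normalizedSignSum, charFun_gaussianReal, neg_div] using
    tendsto_charFun_inv_sqrt_mul_pow (P := bernoulliPM) aemeasurable_id
      (by simp [integral_bernoulliPM]) (by simp [integral_bernoulliPM]) s

lemma memLp_id_normalizedSignSum (m : ℕ) {q : ℝ≥0∞} (hq : q ≠ ∞) :
    MemLp id q (normalizedSignSum m : Measure ℝ) := by
  rw [toMeasure_normalizedSignSum, memLp_map_measure_iff aestronglyMeasurable_id (by fun_prop)]
  have := memLp_eval_pi (fun _ _ _ ↦ memLp_id_bernoulliPM) (C (√m)⁻¹ * ∑ j : Fin m, X j) hq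
  simpa [Function.comp_def, bernoulliCube] using this

lemma isPolynomiallyHypercontractive_pi_bernoulliPM :
    IsPolynomiallyHypercontractive (Measure.pi fun _ : ι ↦ bernoulliPM) := by
  let e := (Fintype.equivFin ι).symm
  have hmap : (bernoulliCube (Fintype.card ι)).map (fun z i ↦ eval z (X (e.symm i))) =
      Measure.pi fun _ ↦ bernoulliPM := by
    rw [← (measurePreserving_piCongrLeft (fun _ ↦ bernoulliPM) e).map_eq]
    congr 1
    ext z i
    simp [MeasurableEquiv.piCongrLeft, Equiv.piCongrLeft]
  rw [← hmap]
  exact (isPolynomiallyHypercontractive_bernoulliCube _).map fun i ↦ (totalDegree_X _).le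

lemma isPolynomiallyHypercontractive_pi_normalizedSignSum (m : ι → ℕ) :
    IsPolynomiallyHypercontractive (Measure.pi fun i ↦ (normalizedSignSum (m i) : Measure ℝ)) := by
  let L (i : ι) : MvPolynomial ((i : ι) × Fin (m i)) ℝ := C (√(m i))⁻¹ * ∑ j, X ⟨i, j⟩
  have hL (i : ι) : (L i).totalDegree ≤ 1 := by
    refine (totalDegree_mul _ _).trans ?_
    rw [totalDegree_C, zero_add]
    exact totalDegree_finsetSum_le fun j _ ↦ (totalDegree_X _).le
  have hcurry : (Measure.pi fun _ : (i : ι) × Fin (m i) ↦ bernoulliPM).map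
      (MeasurableEquiv.piCurry fun _ _ ↦ ℝ) = Measure.pi fun i ↦ bernoulliCube (m i) := by
    simpa only [bernoulliCube, Measure.infinitePi_eq_pi] using
      Measure.infinitePi_map_piCurry fun i (_ : Fin (m i)) ↦ bernoulliPM
  have hmap : (Measure.pi fun i ↦ (normalizedSignSum (m i) : Measure ℝ)) =
      (Measure.pi fun _ ↦ bernoulliPM).map fun z i ↦ eval z (L i) := by
    simp only [toMeasure_normalizedSignSum]
    rw [← Measure.pi_map_pi (fun i ↦ by fun_prop), ← hcurry,
      Measure.map_map (by fun_prop) (by fun_prop)]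
    congr 1
    ext z i
    simp [L, MeasurableEquiv.piCurry, Sigma.curry]
  rw [hmap]
  exact isPolynomiallyHypercontractive_pi_bernoulliPM.map hL

end CentralLimit

lemma IsPolynomiallyHypercontractive.of_tendsto {ι κ : Type*} [Countable ι] {l : Filter κ} [l.NeBot]
    {P : κ → ProbabilityMeasure (ι → ℝ)} {P₀ : ProbabilityMeasure (ι → ℝ)}
    (hP : ∀ k, IsPolynomiallyHypercontractive (P k : Measure (ι → ℝ)))
    (hLp : ∀ k, ∀ p : MvPolynomial ι ℝ, MemLp (fun z ↦ eval z p) 2 (P k : Measure (ι → ℝ)))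
    (hlim : Tendsto P l (𝓝 P₀)) :
    IsPolynomiallyHypercontractive (P₀ : Measure (ι → ℝ)) := by
  intro d p hp t ht
  rcases ht.eq_or_lt with rfl | ht'
  · norm_num
  · exact eLpNorm_le_mul_eLpNorm_of_tendsto hlim p.continuous_eval one_le_two
      (by simpa using ht') ENNReal.ofReal_ne_top (by simp)
      (fun k ↦ (hLp k p).eLpNorm_ne_top) fun k ↦ hP k p hp t ht

lemma isPolynomiallyHypercontractive_pi_of_tendsto_normalizedSignSum {ι κ : Type*} [Fintype ι]
    {l : Filter κ} [l.NeBot] {ν : ι → ProbabilityMeasure ℝ} {m : ι → κ → ℕ}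
    (hν : ∀ i, Tendsto (fun k ↦ normalizedSignSum (m i k)) l (𝓝 (ν i))) :
    IsPolynomiallyHypercontractive (Measure.pi fun i ↦ (ν i : Measure ℝ)) :=
  .of_tendsto (P := fun k ↦ .pi fun i ↦ normalizedSignSum (m i k)) (P₀ := .pi ν)
    (fun k ↦ isPolynomiallyHypercontractive_pi_normalizedSignSum fun i ↦ m i k)
    (fun _ p ↦ memLp_eval_pi (fun _ _ ↦ memLp_id_normalizedSignSum _) p ENNReal.ofNat_ne_top)
    ((ProbabilityMeasure.continuous_pi.tendsto ν).comp (tendsto_pi_nhds.2 hν))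

lemma integral_abs_rpow_le_of_eLpNorm_le {X : Type*} [MeasurableSpace X] {μ : Measure X}
    {f : X → ℝ} {t K : ℝ} (ht : 0 < t) (hK : 0 ≤ K) (hft : MemLp f (.ofReal t) μ)
    (hf2 : MemLp f 2 μ) (h : eLpNorm f (.ofReal t) μ ≤ .ofReal K * eLpNorm f 2 μ) :
    ∫ x, |f x| ^ t ∂μ ≤ K ^ t * (∫ x, f x ^ 2 ∂μ) ^ (t / 2) := by
  have hI (s : ℝ) : 0 ≤ ∫ x, ‖f x‖ ^ s ∂μ := integral_nonneg fun x ↦ by positivity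
  rw [hft.eLpNorm_eq_integral_rpow_norm (by simpa using ht) ENNReal.ofReal_ne_top,
    hf2.eLpNorm_eq_integral_rpow_norm two_ne_zero ENNReal.ofNat_ne_top,
    ← ENNReal.ofReal_mul hK, ENNReal.ofReal_le_ofReal_iff (mul_nonneg hK (by positivity)),
    ENNReal.toReal_ofReal ht.le, ENNReal.toReal_ofNat,
    Real.rpow_inv_le_iff_of_pos (hI t) (mul_nonneg hK (by positivity)) ht,
    Real.mul_rpow hK (by positivity), ← Real.rpow_mul (hI 2), inv_mul_eq_div] at h
  simpa using h

lemma IsPolynomiallyHypercontractive.integral_abs_rpow_le {ι : Type*} {μ : Measure (ι → ℝ)}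
    (hμ : IsPolynomiallyHypercontractive μ) {p : MvPolynomial ι ℝ} {d : ℕ}
    (hLp : ∀ q ≠ ∞, MemLp (fun z ↦ eval z p) q μ) (hp : p.totalDegree ≤ d) {t : ℝ} (ht : 2 ≤ t) :
    ∫ z, |eval z p| ^ t ∂μ ≤ (t - 1) ^ (t * d / 2) * (∫ z, eval z p ^ 2 ∂μ) ^ (t / 2) := by
  have hconst : (√(t - 1) ^ d) ^ t = (t - 1) ^ (t * d / 2) := by
    rw [Real.sqrt_eq_rpow, ← Real.rpow_mul_natCast (by linarith), ← Real.rpow_mul (by linarith)]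
    ring_nf
  rw [← hconst]
  refine integral_abs_rpow_le_of_eLpNorm_le (by linarith) (by positivity)
    (hLp _ ENNReal.ofReal_ne_top) (hLp 2 ENNReal.ofNat_ne_top) ?_
  rw [ENNReal.ofReal_pow (Real.sqrt_nonneg _)]
  exact hμ p hp t ht

section Mixed

variable {α β : Type*}

/-- The one-dimensional marginals of a vector with standard Gaussian coordinates indexed by `α`
and uniform signs as coordinates indexed by `β`. -/
noncomputable def mixedMarginal : α ⊕ β → Measure ℝ :=
  Sum.elim (fun _ ↦ gaussianReal 0 1) fun _ ↦ bernoulliPM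

instance (i : α ⊕ β) : IsProbabilityMeasure (mixedMarginal i) := by
  cases i <;> (dsimp only [mixedMarginal, Sum.elim]; infer_instance)

lemma memLp_id_mixedMarginal (i : α ⊕ β) {q : ℝ≥0∞} (hq : q ≠ ∞) :
    MemLp id q (mixedMarginal i) := by
  cases i
  exacts [memLp_id_gaussianReal' q hq, memLp_id_bernoulliPM]

lemma isPolynomiallyHypercontractive_pi_mixedMarginal [Fintype α] [Fintype β] :
    IsPolynomiallyHypercontractive (Measure.pi (mixedMarginal : α ⊕ β → Measure ℝ)) := by
  refine isPolynomiallyHypercontractive_pi_of_tendsto_normalizedSignSum (l := atTop)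
    (ν := fun i ↦ ⟨mixedMarginal i, inferInstance⟩)
    (m := Sum.elim (fun _ k ↦ k) fun _ _ ↦ 1) ?_
  rintro (_ | _)
  · exact tendsto_normalizedSignSum
  · exact tendsto_const_nhds.congr fun _ ↦ Subtype.ext normalizedSignSum_one.symm

end Mixed

/-- **Mixed hypercontractivity.**  For a polynomial `p` of total degree at most `d` in Gaussian
variables `G` and independent Bernoulli variables `B`, and any real `t ≥ 2`,
`E[|p(G,B)|^t] ≤ (t-1)^{td/2} E[p(G,B)²]^{t/2}`. -/
theorem mixed_hypercontractivity (n₁ n₂ d : ℕ)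
    (p : MvPolynomial (Fin n₁ ⊕ Fin n₂) ℝ) (hp : p.totalDegree ≤ d)
    (t : ℝ) (ht : 2 ≤ t) :
    (∫ z : (Fin n₁ → ℝ) × (Fin n₂ → ℝ),
        |MvPolynomial.eval (Sum.elim z.1 z.2) p| ^ t
        ∂((stdGaussian n₁).prod (bernoulliCube n₂))) ≤
      (t - 1) ^ (t * d / 2) *
        (∫ z : (Fin n₁ → ℝ) × (Fin n₂ → ℝ),
            (MvPolynomial.eval (Sum.elim z.1 z.2) p) ^ 2
            ∂((stdGaussian n₁).prod (bernoulliCube n₂))) ^ (t / 2) := by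
  have hpres := measurePreserving_sumPiEquivProdPi_symm
    (mixedMarginal : Fin n₁ ⊕ Fin n₂ → Measure ℝ)
  have hmoments := isPolynomiallyHypercontractive_pi_mixedMarginal.integral_abs_rpow_le
    (fun _ ↦ memLp_eval_pi (fun _ _ ↦ memLp_id_mixedMarginal _) p) hp ht
  rw [← hpres.integral_comp', ← hpres.integral_comp'] at hmoments
  -- `sumPiEquivProdPi.symm z` unfolds to `Sum.elim z.1 z.2`, and `Measure.pi mixedMarginal` splits
  -- definitionally into `stdGaussian n₁` and `bernoulliCube n₂`.
  exact hmoments
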